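/- arXiv:1202.2559 — 5 statements merged into one kernel-verified Lean document; each statement's English description precedes it below -/
import Mathlib

section
/- Let φ₀ ∈ (−1, 1), σ₀² > 0 and set γ₀² = σ₀²/(1 − φ₀²). Define on {(φ, s) : φ ∈ (−1, 1), s > 0} the function F(φ, s) = φ² γ/(4√π) − √(2/π) · φ φ₀ γ² γ₀²/(γ² + γ₀²)^{3/2}, where γ² = s/(1 − φ²) and γ = √(s/(1 − φ²)). Then both partial derivatives ∂F/∂φ and ∂F/∂s vanish at the point (φ₀, σ₀²). -/
open Real

/-- The limit contrast function `F(φ, s) = P m_θ` of the Gaussian AR(1) model with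
measurement noise, where `γ = √(s/(1 − φ²))` and `γ₀² = σ₀²/(1 − φ₀²)`. -/
noncomputable def limitContrast (φ₀ σ₀2 : ℝ) (φ s : ℝ) : ℝ :=
  φ ^ 2 * Real.sqrt (s / (1 - φ ^ 2)) / (4 * Real.sqrt Real.pi)
    - Real.sqrt (2 / Real.pi) * φ * φ₀ * (Real.sqrt (s / (1 - φ ^ 2))) ^ 2
        * (σ₀2 / (1 - φ₀ ^ 2))
        / ((Real.sqrt (s / (1 - φ ^ 2))) ^ 2 + σ₀2 / (1 - φ₀ ^ 2)) ^ ((3 : ℝ) / 2)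

lemma aux_deriv (p g : ℝ → ℝ) (t dp dg k c : ℝ) (hk : 0 < k) (hc : c = k ^ 2) (hgt : g t = k)
    (hp : HasDerivAt p dp t) (hg : HasDerivAt g dg t) :
    HasDerivAt (fun x => p x ^ 2 * g x / (4 * Real.sqrt Real.pi)
      - Real.sqrt (2 / Real.pi) * p x * p t * (g x) ^ 2 * c
        / ((g x) ^ 2 + c) ^ ((3 : ℝ) / 2)) 0 t := by
  have hpi : 0 < Real.sqrt Real.pi := Real.sqrt_pos.mpr Real.pi_pos
  have h2 : 0 < Real.sqrt 2 := by positivity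
  have h22 : Real.sqrt 2 ^ 2 = 2 := Real.sq_sqrt (by norm_num)
  have hpos : 0 < (g t) ^ 2 + c := by rw [hgt, hc]; positivity
  have hval : (g t) ^ 2 + c = (Real.sqrt 2 * k) ^ 2 := by rw [hgt, hc, mul_pow, h22]; ring
  have e1 : ((g t) ^ 2 + c) ^ ((3 : ℝ) / 2) = (Real.sqrt 2 * k) ^ 3 := by
    rw [hval, ← Real.rpow_natCast, ← Real.rpow_mul (by positivity), ← Real.rpow_natCast]
    norm_num
  have e2 : ((g t) ^ 2 + c) ^ ((3 : ℝ) / 2 - 1) = Real.sqrt 2 * k := by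
    rw [hval, ← Real.rpow_natCast, ← Real.rpow_mul (by positivity)]
    norm_num
  have hd := ((hg.pow 2).add_const c).rpow_const (p := (3 : ℝ) / 2) (Or.inl hpos.ne')
  have hn := (((hp.const_mul (Real.sqrt (2 / Real.pi))).mul_const (p t)).mul (hg.pow 2)).mul_const c
  have h := (((hp.pow 2).mul hg).div_const (4 * Real.sqrt Real.pi)).sub
    (hn.div hd (Real.rpow_pos_of_pos hpos _).ne')
  refine h.congr_deriv ?_
  simp only [Pi.pow_apply, Pi.mul_apply, e1, e2]
  rw [hgt, hc, Real.sqrt_div (by norm_num)]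
  have h4 : Real.sqrt 2 ^ 4 = 4 := by rw [show (4:ℕ) = 2 * 2 from rfl, pow_mul, h22]; norm_num
  have h3 : Real.sqrt 2 ^ 3 = 2 * Real.sqrt 2 := by rw [pow_succ, h22]
  simp only [mul_pow, h3]
  field_simp
  try simp only [h22, h4]
  push_cast
  ring_nf
  try simp only [h22, h4]
  try ring_nf

/-- Both partial derivatives of the limit contrast function vanish at the true
parameter `(φ₀, σ₀²)`. -/
theorem stmt6 (φ₀ σ₀2 : ℝ) (hφ : -1 < φ₀ ∧ φ₀ < 1) (hσ : 0 < σ₀2) :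
    deriv (fun p : ℝ => limitContrast φ₀ σ₀2 p σ₀2) φ₀ = 0
    ∧ deriv (fun s : ℝ => limitContrast φ₀ σ₀2 φ₀ s) σ₀2 = 0 := by
  have h1 : 0 < 1 - φ₀ ^ 2 := by nlinarith [hφ.1, hφ.2]
  have hc : 0 < σ₀2 / (1 - φ₀ ^ 2) := div_pos hσ h1
  have hk := Real.sqrt_pos.mpr hc
  have hck := (Real.sq_sqrt hc.le).symm
  constructor
  · have hg : DifferentiableAt ℝ (fun p : ℝ => Real.sqrt (σ₀2 / (1 - p ^ 2))) φ₀ := by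
      refine DifferentiableAt.sqrt ?_ hc.ne'
      exact DifferentiableAt.div (by fun_prop) (by fun_prop) h1.ne'
    exact (aux_deriv (fun x => x) _ φ₀ _ _ _ _ hk hck rfl (hasDerivAt_id' φ₀)
      hg.hasDerivAt).deriv
  · have hg : DifferentiableAt ℝ (fun s : ℝ => Real.sqrt (s / (1 - φ₀ ^ 2))) σ₀2 := by
      refine DifferentiableAt.sqrt (by fun_prop) hc.ne'
    exact (aux_deriv (fun _ => φ₀) _ σ₀2 _ _ _ _ hk hck rfl (hasDerivAt_const σ₀2 φ₀)
      hg.hasDerivAt).deriv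
end

section
/- Let φ₀ ∈ (−1, 1), σ₀² > 0 and set γ₀² = σ₀²/(1 − φ₀²), γ₀ = √(γ₀²). Define on {(φ, s) : φ ∈ (−1, 1), s > 0} the function F(φ, s) = φ² γ/(4√π) − √(2/π) · φ φ₀ γ² γ₀²/(γ² + γ₀²)^{3/2}, where γ = √(s/(1 − φ²)). Then the Hessian matrix of F at the point (φ₀, σ₀²) equals (1/(8√π (1 − φ₀²)²)) · [[γ₀(7φ₀⁴ − 4φ₀² + 4), (−5φ₀⁵ + 3φ₀³ + 2φ₀)/(2γ₀(1 − φ₀²))], [(−5φ₀⁵ + 3φ₀³ + 2φ₀)/(2γ₀(1 − φ₀²)), 7φ₀²/(4γ₀³)]]. -/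
open Real

open Filter Topology

noncomputable def RR (p s : ℝ) : ℝ := Real.sqrt (s / (1 - p ^ 2))
noncomputable def WW (v p s : ℝ) : ℝ := Real.sqrt (RR p s ^ 2 + v)

lemma one_sub_pos {p : ℝ} (h : -1 < p ∧ p < 1) : 0 < 1 - p ^ 2 := by
  nlinarith [h.1, h.2]

lemma RR_pos {p s : ℝ} (h : -1 < p ∧ p < 1) (hs : 0 < s) : 0 < RR p s :=
  Real.sqrt_pos.2 (div_pos hs (one_sub_pos h))

lemma RR_sq {p s : ℝ} (h : -1 < p ∧ p < 1) (hs : 0 < s) : RR p s ^ 2 = s / (1 - p ^ 2) :=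
  Real.sq_sqrt (div_pos hs (one_sub_pos h)).le

lemma WW_pos {v p s : ℝ} (hv : 0 < v) : 0 < WW v p s :=
  Real.sqrt_pos.2 (by positivity)

lemma RR_dp {p s : ℝ} (h : -1 < p ∧ p < 1) (hs : 0 < s) :
    HasDerivAt (fun q => RR q s) (p * RR p s / (1 - p ^ 2)) p := by
  have h1 := one_sub_pos h
  have hR := RR_pos h hs
  have hd : HasDerivAt (fun q : ℝ => s / (1 - q ^ 2)) (2 * p * s / (1 - p ^ 2) ^ 2) p := by
    have := (hasDerivAt_const p s).div (((hasDerivAt_id p).pow 2).const_sub 1) h1.ne'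
    refine HasDerivAt.congr_deriv (this) ?_
    simp; ring
  have := hd.sqrt (div_pos hs h1).ne'
  refine HasDerivAt.congr_deriv (this) ?_
  change _ / (2 * RR p s) = _
  have e := RR_sq h hs
  field_simp
  try rw [e]
  try field_simp

lemma RR_ds {p s : ℝ} (h : -1 < p ∧ p < 1) (hs : 0 < s) :
    HasDerivAt (fun t => RR p t) (1 / (2 * RR p s * (1 - p ^ 2))) s := by
  have h1 := one_sub_pos h
  have hR := RR_pos h hs
  have := ((hasDerivAt_id s).div_const (1 - p ^ 2)).sqrt (div_pos hs h1).ne'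
  refine HasDerivAt.congr_deriv (this) ?_
  change _ / (2 * RR p s) = _
  field_simp

lemma sq_dd {r : ℝ → ℝ} {r' x v : ℝ} (hr : HasDerivAt r r' x) (hv : 0 < v) :
    HasDerivAt (fun y => Real.sqrt (r y ^ 2 + v)) (r x * r' / Real.sqrt (r x ^ 2 + v)) x := by
  have hp : 0 < r x ^ 2 + v := by positivity
  have := ((hr.pow 2).add_const v).sqrt hp.ne'
  refine HasDerivAt.congr_deriv (this) ?_
  have := Real.sqrt_pos.2 hp
  simp only [Pi.pow_apply]
  push_cast
  field_simp
  try ring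

lemma WW_dp {v p s : ℝ} (hv : 0 < v) (h : -1 < p ∧ p < 1) (hs : 0 < s) :
    HasDerivAt (fun q => WW v q s) (RR p s * (p * RR p s / (1 - p ^ 2)) / WW v p s) p :=
  sq_dd (RR_dp h hs) hv

lemma WW_ds {v p s : ℝ} (hv : 0 < v) (h : -1 < p ∧ p < 1) (hs : 0 < s) :
    HasDerivAt (fun t => WW v p t) (RR p s * (1 / (2 * RR p s * (1 - p ^ 2))) / WW v p s) s :=
  sq_dd (RR_ds h hs) hv

lemma lc_eq {φ₀ σ p s : ℝ} (h0 : -1 < φ₀ ∧ φ₀ < 1) (hσ : 0 < σ) :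
    limitContrast φ₀ σ p s = p ^ 2 * RR p s * (1 / (4 * √π))
      - (√2 / √π * φ₀ * (σ / (1 - φ₀ ^ 2))) * (p * (RR p s ^ 2 / WW (σ / (1 - φ₀ ^ 2)) p s ^ 3)) := by
  have hv := div_pos hσ (one_sub_pos h0)
  unfold limitContrast WW
  change _ - _ * RR p s ^ 2 * _ / (RR p s ^ 2 + _) ^ _ = _
  have hp : 0 ≤ RR p s ^ 2 + σ / (1 - φ₀ ^ 2) := by positivity
  have e : (RR p s ^ 2 + σ / (1 - φ₀ ^ 2)) ^ ((3 : ℝ) / 2)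
      = √(RR p s ^ 2 + σ / (1 - φ₀ ^ 2)) ^ 3 := by
    rw [Real.sqrt_eq_rpow, ← Real.rpow_natCast _ 3, ← Real.rpow_mul hp]; norm_num
  rw [e, Real.sqrt_div (x := 2) (by norm_num)]
  change p ^ 2 * RR p s / _ - _ = _
  ring

lemma gen_d {a b x p' r' w' : ℝ} {p r w : ℝ → ℝ} (hp : HasDerivAt p p' x)
    (hr : HasDerivAt r r' x) (hw : HasDerivAt w w' x) (hw0 : w x ≠ 0) :
    HasDerivAt (fun y => p y ^ 2 * r y * a - b * (p y * (r y ^ 2 / w y ^ 3)))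
      ((2 * p x * p' * r x + p x ^ 2 * r') * a
        - b * (p' * (r x ^ 2 / w x ^ 3)
          + p x * (2 * r x * r' / w x ^ 3 - 3 * r x ^ 2 * w' / w x ^ 4))) x := by
  have := (((hp.pow 2).mul hr).mul_const a).sub
    ((hp.mul ((hr.pow 2).div (hw.pow 3) (pow_ne_zero 3 hw0))).const_mul b)
  refine HasDerivAt.congr_deriv (this) ?_
  simp only [Pi.pow_apply, Pi.div_apply]
  field_simp
  push_cast
  ring

noncomputable def Fp (a b v p s : ℝ) : ℝ :=
  a * (2 * (p * RR p s) + p ^ 3 * RR p s / (1 - p ^ 2)) - b * (RR p s ^ 2 / WW v p s ^ 3)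
    - b * (p ^ 2 * RR p s ^ 2 / (1 - p ^ 2) * (2 / WW v p s ^ 3 - 3 * RR p s ^ 2 / WW v p s ^ 5))

noncomputable def Fs (a b v p s : ℝ) : ℝ :=
  a * (p ^ 2 / (2 * RR p s * (1 - p ^ 2)))
    - b * (p / (1 - p ^ 2) * (1 / WW v p s ^ 3 - 3 / 2 * (RR p s ^ 2 / WW v p s ^ 5)))

lemma deriv_p {φ₀ σ p s : ℝ} (h0 : -1 < φ₀ ∧ φ₀ < 1) (hσ : 0 < σ) (h : -1 < p ∧ p < 1)
    (hs : 0 < s) : deriv (fun q => limitContrast φ₀ σ q s) p =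
      Fp (1 / (4 * √π)) (√2 / √π * φ₀ * (σ / (1 - φ₀ ^ 2))) (σ / (1 - φ₀ ^ 2)) p s := by
  have hv := div_pos hσ (one_sub_pos h0)
  simp only [lc_eq h0 hσ]
  generalize σ / (1 - φ₀ ^ 2) = v at *
  have hW := WW_pos (p := p) (s := s) hv
  have h1 := one_sub_pos h
  rw [(gen_d (hasDerivAt_id' p) (RR_dp h hs) (WW_dp hv h hs) hW.ne').deriv]
  unfold Fp
  field_simp
  ring

lemma deriv_s {φ₀ σ p s : ℝ} (h0 : -1 < φ₀ ∧ φ₀ < 1) (hσ : 0 < σ) (h : -1 < p ∧ p < 1)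
    (hs : 0 < s) : deriv (fun q => limitContrast φ₀ σ p q) s =
      Fs (1 / (4 * √π)) (√2 / √π * φ₀ * (σ / (1 - φ₀ ^ 2))) (σ / (1 - φ₀ ^ 2)) p s := by
  have hv := div_pos hσ (one_sub_pos h0)
  simp only [lc_eq h0 hσ]
  generalize σ / (1 - φ₀ ^ 2) = v at *
  have hW := WW_pos (p := p) (s := s) hv
  have hR := RR_pos h hs
  have h1 := one_sub_pos h
  rw [(gen_d (hasDerivAt_const s p) (RR_ds h hs) (WW_ds hv h hs) hW.ne').deriv]
  unfold Fs
  field_simp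
  ring

lemma gen_Fp {a b x p' r' w' : ℝ} {p r w : ℝ → ℝ} (hp : HasDerivAt p p' x)
    (hr : HasDerivAt r r' x) (hw : HasDerivAt w w' x) (hw0 : w x ≠ 0) (h1 : 1 - p x ^ 2 ≠ 0) :
    HasDerivAt (fun y => a * (2 * (p y * r y) + p y ^ 3 * r y / (1 - p y ^ 2))
        - b * (r y ^ 2 / w y ^ 3)
        - b * (p y ^ 2 * r y ^ 2 / (1 - p y ^ 2) * (2 / w y ^ 3 - 3 * r y ^ 2 / w y ^ 5)))
      (a * (2 * (p' * r x + p x * r') + ((3 * p x ^ 2 * p' * r x + p x ^ 3 * r') / (1 - p x ^ 2)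
          + p x ^ 3 * r x * (2 * p x * p') / (1 - p x ^ 2) ^ 2))
        - b * (2 * r x * r' / w x ^ 3 - 3 * r x ^ 2 * w' / w x ^ 4)
        - b * (((2 * p x * p' * r x ^ 2 + p x ^ 2 * (2 * r x * r')) / (1 - p x ^ 2)
            + p x ^ 2 * r x ^ 2 * (2 * p x * p') / (1 - p x ^ 2) ^ 2)
              * (2 / w x ^ 3 - 3 * r x ^ 2 / w x ^ 5)
          + p x ^ 2 * r x ^ 2 / (1 - p x ^ 2)
            * (-6 * w' / w x ^ 4 - 6 * r x * r' / w x ^ 5 + 15 * r x ^ 2 * w' / w x ^ 6))) x := by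
  have d1 := (hp.pow 2).const_sub 1
  have w3 := hw.pow 3
  have w5 := hw.pow 5
  have n3 := pow_ne_zero 3 hw0
  have n5 := pow_ne_zero 5 hw0
  have A := (((hp.mul hr).const_mul 2).add (((hp.pow 3).mul hr).div d1 h1)).const_mul a
  have B := ((hr.pow 2).div w3 n3).const_mul b
  have C := ((((hp.pow 2).mul (hr.pow 2)).div d1 h1).mul
    (((hasDerivAt_const x (2:ℝ)).div w3 n3).sub
      (((hr.pow 2).const_mul 3).div w5 n5))).const_mul b
  refine HasDerivAt.congr_deriv ((A.sub B).sub C) ?_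
  simp only [Pi.pow_apply, Pi.div_apply, Pi.mul_apply, Pi.sub_apply]
  generalize hd : 1 - p x ^ 2 = d at *
  push_cast
  field_simp
  ring

lemma gen_Fs {a b x p' r' w' : ℝ} {p r w : ℝ → ℝ} (hp : HasDerivAt p p' x)
    (hr : HasDerivAt r r' x) (hw : HasDerivAt w w' x) (hw0 : w x ≠ 0) (hr0 : r x ≠ 0)
    (h1 : 1 - p x ^ 2 ≠ 0) :
    HasDerivAt (fun y => a * (p y ^ 2 / (2 * r y * (1 - p y ^ 2)))
        - b * (p y / (1 - p y ^ 2) * (1 / w y ^ 3 - 3 / 2 * (r y ^ 2 / w y ^ 5))))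
      (a * (2 * p x * p' / (2 * r x * (1 - p x ^ 2)) - p x ^ 2 * r' / (2 * r x ^ 2 * (1 - p x ^ 2))
          + p x ^ 2 * (2 * p x * p') / (2 * r x * (1 - p x ^ 2) ^ 2))
        - b * ((p' / (1 - p x ^ 2) + p x * (2 * p x * p') / (1 - p x ^ 2) ^ 2)
              * (1 / w x ^ 3 - 3 / 2 * (r x ^ 2 / w x ^ 5))
          + p x / (1 - p x ^ 2)
            * (-3 * w' / w x ^ 4 - 3 * r x * r' / w x ^ 5 + 15 / 2 * r x ^ 2 * w' / w x ^ 6))) x := by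
  have d1 := (hp.pow 2).const_sub 1
  have w3 := hw.pow 3
  have w5 := hw.pow 5
  have n3 := pow_ne_zero 3 hw0
  have n5 := pow_ne_zero 5 hw0
  have A := ((hp.pow 2).div ((hr.const_mul 2).mul d1)
    (mul_ne_zero (mul_ne_zero two_ne_zero hr0) h1)).const_mul a
  have C := ((hp.div d1 h1).mul
    (((hasDerivAt_const x (1:ℝ)).div w3 n3).sub
      (((hr.pow 2).div w5 n5).const_mul (3/2)))).const_mul b
  refine HasDerivAt.congr_deriv (A.sub C) ?_
  simp only [Pi.pow_apply, Pi.div_apply, Pi.mul_apply, Pi.sub_apply]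
  generalize hd : 1 - p x ^ 2 = d at *
  push_cast
  field_simp
  ring

/-- The Hessian matrix of the limit contrast function at `(φ₀, σ₀²)` equals
`(1/(8√π (1 − φ₀²)²)) [[γ₀(7φ₀⁴ − 4φ₀² + 4), (−5φ₀⁵ + 3φ₀³ + 2φ₀)/(2γ₀(1 − φ₀²))],
[(−5φ₀⁵ + 3φ₀³ + 2φ₀)/(2γ₀(1 − φ₀²)), 7φ₀²/(4γ₀³)]]`, where `γ₀ = √(σ₀²/(1 − φ₀²))`. -/
theorem stmt7 (φ₀ σ₀2 : ℝ) (hφ : -1 < φ₀ ∧ φ₀ < 1) (hσ : 0 < σ₀2)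
    (γ₀ : ℝ) (hγ₀ : γ₀ = Real.sqrt (σ₀2 / (1 - φ₀ ^ 2))) :
    (deriv (fun p : ℝ => deriv (fun q : ℝ => limitContrast φ₀ σ₀2 q σ₀2) p) φ₀
        = (1 / (8 * Real.sqrt Real.pi * (1 - φ₀ ^ 2) ^ 2))
          * (γ₀ * (7 * φ₀ ^ 4 - 4 * φ₀ ^ 2 + 4)))
    ∧ (deriv (fun p : ℝ => deriv (fun s : ℝ => limitContrast φ₀ σ₀2 p s) σ₀2) φ₀
        = (1 / (8 * Real.sqrt Real.pi * (1 - φ₀ ^ 2) ^ 2))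
          * ((-5 * φ₀ ^ 5 + 3 * φ₀ ^ 3 + 2 * φ₀) / (2 * γ₀ * (1 - φ₀ ^ 2))))
    ∧ (deriv (fun s : ℝ => deriv (fun p : ℝ => limitContrast φ₀ σ₀2 p s) φ₀) σ₀2
        = (1 / (8 * Real.sqrt Real.pi * (1 - φ₀ ^ 2) ^ 2))
          * ((-5 * φ₀ ^ 5 + 3 * φ₀ ^ 3 + 2 * φ₀) / (2 * γ₀ * (1 - φ₀ ^ 2))))
    ∧ (deriv (fun s : ℝ => deriv (fun t : ℝ => limitContrast φ₀ σ₀2 φ₀ t) s) σ₀2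
        = (1 / (8 * Real.sqrt Real.pi * (1 - φ₀ ^ 2) ^ 2))
          * (7 * φ₀ ^ 2 / (4 * γ₀ ^ 3))) := by
  have hv := div_pos hσ (one_sub_pos hφ)
  have hR := RR_pos hφ hσ
  have hW := WW_pos (p := φ₀) (s := σ₀2) hv
  have h1 := one_sub_pos hφ
  have hg : RR φ₀ σ₀2 = γ₀ := hγ₀.symm
  have hv2 : σ₀2 / (1 - φ₀ ^ 2) = γ₀ ^ 2 := by rw [← hg, RR_sq hφ hσ]
  have hγ : 0 < γ₀ := hg ▸ hR
  have hWg : WW (σ₀2 / (1 - φ₀ ^ 2)) φ₀ σ₀2 = √2 * γ₀ := by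
    unfold WW
    rw [hv2, hg, ← two_mul, Real.sqrt_mul (by norm_num), Real.sqrt_sq hγ.le]
  have ht : 0 < √2 := by positivity
  have t2 : √2 ^ 2 = 2 := Real.sq_sqrt (by norm_num)
  have t3 : √2 ^ 3 = 2 * √2 := by rw [pow_succ, t2]
  have t4 : √2 ^ 4 = 4 := by rw [pow_succ, t3]; linarith
  have t5 : √2 ^ 5 = 4 * √2 := by rw [pow_succ, t4]
  have t6 : √2 ^ 6 = 8 := by rw [pow_succ, t5]; linarith
  have hc : 0 < √π := Real.sqrt_pos.2 Real.pi_pos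
  have evp : ∀ᶠ p in 𝓝 φ₀, -1 < p ∧ p < 1 := Ioo_mem_nhds hφ.1 hφ.2
  have evs : ∀ᶠ s in 𝓝 σ₀2, 0 < s := Ioi_mem_nhds hσ
  refine ⟨?_, ?_, ?_, ?_⟩
  · rw [EventuallyEq.deriv_eq (evp.mono fun p hp => deriv_p hφ hσ hp hσ)]
    unfold Fp
    rw [(gen_Fp (hasDerivAt_id' φ₀) (RR_dp hφ hσ) (WW_dp hv hφ hσ) hW.ne' h1.ne').deriv]
    rw [hWg, hg, hv2]
    simp only [mul_pow, t3, t4, t5, t6]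
    field_simp
    try simp only [t2, t3, t4, t5, t6]
    ring
  · rw [EventuallyEq.deriv_eq (evp.mono fun p hp => deriv_s hφ hσ hp hσ)]
    unfold Fs
    rw [(gen_Fs (hasDerivAt_id' φ₀) (RR_dp hφ hσ) (WW_dp hv hφ hσ) hW.ne' hR.ne' h1.ne').deriv]
    rw [hWg, hg, hv2]
    simp only [mul_pow, t3, t4, t5, t6]
    field_simp
    try simp only [t2, t3, t4, t5, t6]
    ring
  · rw [EventuallyEq.deriv_eq (evs.mono fun s hs => deriv_p hφ hσ hφ hs)]
    unfold Fp
    rw [(gen_Fp (hasDerivAt_const σ₀2 φ₀) (RR_ds hφ hσ) (WW_ds hv hφ hσ) hW.ne' h1.ne').deriv]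
    rw [hWg, hg, hv2]
    simp only [mul_pow, t3, t4, t5, t6]
    field_simp
    try simp only [t2, t3, t4, t5, t6]
    ring
  · rw [EventuallyEq.deriv_eq (evs.mono fun s hs => deriv_s hφ hσ hφ hs)]
    unfold Fs
    rw [(gen_Fs (hasDerivAt_const σ₀2 φ₀) (RR_ds hφ hσ) (WW_ds hv hφ hσ) hW.ne' hR.ne' h1.ne').deriv]
    rw [hWg, hg, hv2]
    simp only [mul_pow, t3, t4, t5, t6]
    field_simp
    try simp only [t2, t3, t4, t5, t6]
    ring
end

section
/- Let γ > 0 and ρ ∈ (−1, 1), and let (X₁, X₂) be a centered bivariate Gaussian vector with Var(X₁) = Var(X₂) = γ² and Cov(X₁, X₂) = ρ γ². Define V = γ²(1 − ρ²)(2 − ρ²)/((2 − ρ²)² − ρ²) and 𝓥 = γ²(1 − ρ²)/(2 − ρ²). Then E[X₁² X₂² exp(−(X₁² + X₂²)/(2γ²))] = (1/γ)(2 − ρ²)^{−1/2} V^{3/2} (𝓥 + 3ρ² V/(2 − ρ²)²). -/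
open MeasureTheory Real

/-- The density of a centered bivariate Gaussian vector with `Var(X₁) = Var(X₂) = γ²`
and correlation `ρ`, i.e. covariance matrix `γ²[[1, ρ],[ρ, 1]]`. -/
noncomputable def bivGaussDens (γ ρ x₁ x₂ : ℝ) : ℝ :=
  (2 * Real.pi * γ ^ 2 * Real.sqrt (1 - ρ ^ 2))⁻¹ *
    Real.exp (-(x₁ ^ 2 - 2 * ρ * x₁ * x₂ + x₂ ^ 2) / (2 * γ ^ 2 * (1 - ρ ^ 2)))

lemma gm_int (v : ℝ) (hv : 0 < v) (n : ℕ) :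
    Integrable (fun x : ℝ => x ^ n * Real.exp (-x ^ 2 / (2 * v))) := by
  have h := integrable_rpow_mul_exp_neg_mul_sq (b := 1 / (2 * v)) (by positivity)
    (s := (n : ℝ)) (by have := Nat.cast_nonneg (α := ℝ) n; linarith)
  refine h.congr (Filter.Eventually.of_forall fun x => ?_)
  simp only [Real.rpow_natCast]
  congr 2
  ring

lemma gm_hd (v : ℝ) (hv : 0 < v) (x : ℝ) :
    HasDerivAt (fun x : ℝ => Real.exp (-x ^ 2 / (2 * v)))
      (-(x / v) * Real.exp (-x ^ 2 / (2 * v))) x := by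
  have h := (((hasDerivAt_pow 2 x).neg).div_const (2 * v)).exp
  refine h.congr_deriv ?_
  simp
  field_simp

lemma gm_zero (v : ℝ) : ∫ x : ℝ, Real.exp (-x ^ 2 / (2 * v)) = √(2 * π * v) := by
  have h := integral_gaussian (1 / (2 * v))
  have e : π / (1 / (2 * v)) = 2 * π * v := by
    rw [div_div_eq_mul_div]; ring
  rw [e] at h
  rw [← h]
  congr 1
  ext x
  congr 1
  ring

lemma gm_one (v : ℝ) (hv : 0 < v) :
    ∫ x : ℝ, x ^ 1 * Real.exp (-x ^ 2 / (2 * v)) = 0 := by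
  have h := integral_eq_zero_of_hasDerivAt_of_integrable (gm_hd v hv)
    (((gm_int v hv 1).const_mul (-(1 / v))).congr
      (Filter.Eventually.of_forall fun x => by simp only; ring))
    ((gm_int v hv 0).congr (Filter.Eventually.of_forall fun x => by simp))
  have e : ∀ x : ℝ, -(x / v) * Real.exp (-x ^ 2 / (2 * v))
      = (-(1 / v)) * (x ^ 1 * Real.exp (-x ^ 2 / (2 * v))) := fun x => by ring
  simp_rw [e] at h
  rw [integral_const_mul] at h
  rcases mul_eq_zero.1 h with h | h
  · have : 0 < 1 / v := by positivity
    linarith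
  · exact h

lemma gm_succ (v : ℝ) (hv : 0 < v) (n : ℕ) :
    ∫ x : ℝ, x ^ (n + 2) * Real.exp (-x ^ 2 / (2 * v))
      = (n + 1) * v * ∫ x : ℝ, x ^ n * Real.exp (-x ^ 2 / (2 * v)) := by
  have hi := ((gm_int v hv n).const_mul ((n : ℝ) + 1)).sub
      ((gm_int v hv (n + 2)).const_mul (1 / v))
  have h := integral_eq_zero_of_hasDerivAt_of_integrable
    (f := fun x : ℝ => x ^ (n + 1) * Real.exp (-x ^ 2 / (2 * v)))
    (fun x => ((hasDerivAt_pow (n + 1) x).mul (gm_hd v hv x)).congr_deriv (by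
      show _ = ((n : ℝ) + 1) * (x ^ n * Real.exp (-x ^ 2 / (2 * v)))
        - 1 / v * (x ^ (n + 2) * Real.exp (-x ^ 2 / (2 * v)))
      simp only [Nat.add_sub_cancel]
      push_cast
      ring)) hi (gm_int v hv (n + 1))
  simp only [Pi.sub_apply] at h
  rw [integral_sub ((gm_int v hv n).const_mul _) ((gm_int v hv (n + 2)).const_mul _),
    integral_const_mul, integral_const_mul] at h
  generalize (∫ x : ℝ, x ^ (n + 2) * Real.exp (-x ^ 2 / (2 * v))) = A at h ⊢
  generalize (∫ x : ℝ, x ^ n * Real.exp (-x ^ 2 / (2 * v))) = B at h ⊢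
  field_simp at h
  linarith

lemma shear_mp (k : ℝ) :
    MeasurePreserving (fun p : ℝ × ℝ => (p.1, p.2 + k * p.1)) volume volume := by
  have := (MeasurePreserving.id (volume : Measure ℝ)).skew_product
    (μc := (volume : Measure ℝ)) (μd := volume) (g := fun a c => c + k * a)
    (by unfold Function.uncurry; fun_prop)
    (Filter.Eventually.of_forall fun a => (measurePreserving_add_right volume (k * a)).map_eq)
  exact this

lemma two_int (v w k : ℝ) (hv : 0 < v) (hw : 0 < w) :
    ∫ p : ℝ × ℝ, p.1 ^ 2 * (p.2 + k * p.1) ^ 2 *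
      (Real.exp (-p.1 ^ 2 / (2 * v)) * Real.exp (-p.2 ^ 2 / (2 * w)))
      = √(2 * π * v) * √(2 * π * w) * (v * (w + 3 * k ^ 2 * v)) := by
  have e : ∀ p : ℝ × ℝ, p.1 ^ 2 * (p.2 + k * p.1) ^ 2 *
      (Real.exp (-p.1 ^ 2 / (2 * v)) * Real.exp (-p.2 ^ 2 / (2 * w)))
      = (p.1 ^ 2 * Real.exp (-p.1 ^ 2 / (2 * v))) * (p.2 ^ 2 * Real.exp (-p.2 ^ 2 / (2 * w)))
      + (2 * k) * ((p.1 ^ 3 * Real.exp (-p.1 ^ 2 / (2 * v))) *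
          (p.2 ^ 1 * Real.exp (-p.2 ^ 2 / (2 * w))))
      + k ^ 2 * ((p.1 ^ 4 * Real.exp (-p.1 ^ 2 / (2 * v))) *
          (p.2 ^ 0 * Real.exp (-p.2 ^ 2 / (2 * w)))) := fun p => by ring
  simp_rw [e]
  have i1 := (gm_int v hv 2).mul_prod (gm_int w hw 2)
  have i2 := ((gm_int v hv 3).mul_prod (gm_int w hw 1)).const_mul (2 * k)
  have i3 := ((gm_int v hv 4).mul_prod (gm_int w hw 0)).const_mul (k ^ 2)
  have i12 := i1.add i2
  simp only [Pi.add_def] at i12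
  rw [Measure.volume_eq_prod, integral_add i12 i3, integral_add i1 i2,
    integral_const_mul, integral_const_mul,
    integral_prod_mul (fun x : ℝ => x ^ 2 * Real.exp (-x ^ 2 / (2 * v)))
      (fun x : ℝ => x ^ 2 * Real.exp (-x ^ 2 / (2 * w))),
    integral_prod_mul (fun x : ℝ => x ^ 3 * Real.exp (-x ^ 2 / (2 * v)))
      (fun x : ℝ => x ^ 1 * Real.exp (-x ^ 2 / (2 * w))),
    integral_prod_mul (fun x : ℝ => x ^ 4 * Real.exp (-x ^ 2 / (2 * v)))
      (fun x : ℝ => x ^ 0 * Real.exp (-x ^ 2 / (2 * w))), gm_one w hw]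
  have z : ∀ u : ℝ, ∫ x : ℝ, x ^ 0 * Real.exp (-x ^ 2 / (2 * u)) = √(2 * π * u) := fun u => by
    simpa using gm_zero u
  have a2 := gm_succ v hv 0
  have b2 := gm_succ w hw 0
  have a4 := gm_succ v hv 2
  simp only [Nat.reduceAdd] at a2 b2 a4
  rw [a4, a2, b2, z, z]
  push_cast
  ring

/-- For a centered bivariate Gaussian `(X₁, X₂)` with common variance `γ²` and
correlation `ρ`, with `V = γ²(1−ρ²)(2−ρ²)/((2−ρ²)²−ρ²)` and `𝓥 = γ²(1−ρ²)/(2−ρ²)`: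
`E[X₁² X₂² exp(−(X₁²+X₂²)/(2γ²))] = (1/γ)(2−ρ²)^{−1/2} V^{3/2}(𝓥 + 3ρ²V/(2−ρ²)²)`. -/
theorem stmt12 (γ ρ : ℝ) (hγ : 0 < γ) (hρ : -1 < ρ ∧ ρ < 1)
    (V 𝓥 : ℝ)
    (hV : V = γ ^ 2 * (1 - ρ ^ 2) * (2 - ρ ^ 2) / ((2 - ρ ^ 2) ^ 2 - ρ ^ 2))
    (h𝓥 : 𝓥 = γ ^ 2 * (1 - ρ ^ 2) / (2 - ρ ^ 2)) :
    ∫ p : ℝ × ℝ, p.1 ^ 2 * p.2 ^ 2 * Real.exp (-(p.1 ^ 2 + p.2 ^ 2) / (2 * γ ^ 2))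
        * bivGaussDens γ ρ p.1 p.2
      = (1 / γ) * (2 - ρ ^ 2) ^ (-(1 : ℝ) / 2) * V ^ ((3 : ℝ) / 2)
          * (𝓥 + 3 * ρ ^ 2 * V / (2 - ρ ^ 2) ^ 2) := by
  obtain ⟨h1, h2⟩ := hρ
  have hs : 0 < 1 - ρ ^ 2 := by nlinarith
  have ha : 0 < 2 - ρ ^ 2 := by linarith
  have hd : 0 < (2 - ρ ^ 2) ^ 2 - ρ ^ 2 := by nlinarith
  have hVp : 0 < V := by rw [hV]; positivity
  have hWp : 0 < 𝓥 := by rw [h𝓥]; positivity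
  have key := two_int V 𝓥 (ρ / (2 - ρ ^ 2)) hVp hWp
  set C := (2 * Real.pi * γ ^ 2 * Real.sqrt (1 - ρ ^ 2))⁻¹ with hC
  have step : ∫ p : ℝ × ℝ, p.1 ^ 2 * p.2 ^ 2 * Real.exp (-(p.1 ^ 2 + p.2 ^ 2) / (2 * γ ^ 2))
        * bivGaussDens γ ρ p.1 p.2 = C * ∫ p : ℝ × ℝ, p.1 ^ 2 * (p.2 + ρ / (2 - ρ ^ 2) * p.1) ^ 2 *
      (Real.exp (-p.1 ^ 2 / (2 * V)) * Real.exp (-p.2 ^ 2 / (2 * 𝓥))) := by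
    have mp := shear_mp (ρ / (2 - ρ ^ 2))
    rw [← integral_const_mul]
    conv_lhs => rw [← mp.map_eq]
    rw [integral_map mp.measurable.aemeasurable
      (by unfold bivGaussDens; exact Continuous.aestronglyMeasurable (by fun_prop))]
    congr 1
    ext p
    unfold bivGaussDens
    rw [← hC]
    have hexp : Real.exp (-(p.1 ^ 2 + (p.2 + ρ / (2 - ρ ^ 2) * p.1) ^ 2) / (2 * γ ^ 2)) *
        Real.exp (-(p.1 ^ 2 - 2 * ρ * p.1 * (p.2 + ρ / (2 - ρ ^ 2) * p.1) +
          (p.2 + ρ / (2 - ρ ^ 2) * p.1) ^ 2) / (2 * γ ^ 2 * (1 - ρ ^ 2))) =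
        Real.exp (-p.1 ^ 2 / (2 * V)) * Real.exp (-p.2 ^ 2 / (2 * 𝓥)) := by
      rw [← Real.exp_add, ← Real.exp_add, hV, h𝓥]
      congr 1
      have := hs.ne'
      have := ha.ne'
      have := hd.ne'
      field_simp
      ring
    rw [← hexp]
    ring
  rw [step, key]
  have hW2 : √(2 * π * 𝓥) = √(2 * π) * (γ * √(1 - ρ ^ 2) / √(2 - ρ ^ 2)) := by
    rw [h𝓥, Real.sqrt_mul (by positivity), Real.sqrt_div (by positivity),
      Real.sqrt_mul (x := γ ^ 2) (by positivity), Real.sqrt_sq hγ.le]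
  have hV2 : √(2 * π * V) = √(2 * π) * √V := by
    rw [Real.sqrt_mul (by positivity)]
  have hVr : V ^ ((3 : ℝ) / 2) = V * √V := by
    rw [Real.sqrt_eq_rpow, show (3 : ℝ) / 2 = 1 + 1 / 2 by norm_num, Real.rpow_add hVp,
      Real.rpow_one]
  have har : (2 - ρ ^ 2) ^ (-(1 : ℝ) / 2) = (√(2 - ρ ^ 2))⁻¹ := by
    rw [Real.sqrt_eq_rpow, ← Real.rpow_neg ha.le]
    norm_num
  rw [hW2, hV2, hVr, har, hC]
  have hp : √(2 * π) * √(2 * π) = 2 * π := Real.mul_self_sqrt (by positivity)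
  have hs0 := (Real.sqrt_pos.2 hs).ne'
  have ha0 := (Real.sqrt_pos.2 ha).ne'
  have hπ := Real.pi_pos.ne'
  calc _ = (√(2 * π) * √(2 * π)) * (2 * Real.pi * γ ^ 2 * √(1 - ρ ^ 2))⁻¹ *
        (√V * (γ * √(1 - ρ ^ 2) / √(2 - ρ ^ 2)) *
          (V * (𝓥 + 3 * (ρ / (2 - ρ ^ 2)) ^ 2 * V))) := by ring
    _ = _ := by
      rw [hp]
      have e2 : 3 * (ρ / (2 - ρ ^ 2)) ^ 2 * V = 3 * ρ ^ 2 * V / (2 - ρ ^ 2) ^ 2 := by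
        rw [div_pow]; ring
      rw [e2]
      generalize 𝓥 + 3 * ρ ^ 2 * V / (2 - ρ ^ 2) ^ 2 = T
      field_simp
end

section
/- Let γ > 0 and ρ ∈ (−1, 1), and let (X₁, X₂) be a centered bivariate Gaussian vector with Var(X₁) = Var(X₂) = γ² and Cov(X₁, X₂) = ρ γ². Define V = γ²(1 − ρ²)(2 − ρ²)/((2 − ρ²)² − ρ²) and 𝓥 = γ²(1 − ρ²)/(2 − ρ²). Then E[X₁² X₂⁴ exp(−(X₁² + X₂²)/(2γ²))] = (3/γ)(2 − ρ²)^{−1/2} V^{5/2} (𝓥 + 5ρ² V/(2 − ρ²)²). -/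
open MeasureTheory Real

lemma gint (b : ℝ) (hb : 0 < b) (n : ℕ) :
    Integrable (fun x : ℝ => x ^ n * Real.exp (-b * x ^ 2)) := by
  have h := integrable_rpow_mul_exp_neg_mul_sq hb (s := (n : ℝ)) (by have : (0:ℝ) ≤ n := n.cast_nonneg
                                                                     linarith)
  simpa using h

lemma grec (b : ℝ) (hb : 0 < b) (n : ℕ) :
    ∫ x : ℝ, x ^ (n + 2) * Real.exp (-b * x ^ 2) =
      (n + 1) / (2 * b) * ∫ x : ℝ, x ^ n * Real.exp (-b * x ^ 2) := by
  have h := integral_eq_zero_of_hasDerivAt_of_integrable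
    (f := fun x : ℝ => x ^ (n + 1) * Real.exp (-b * x ^ 2))
    (f' := fun x : ℝ => (n + 1) * (x ^ n * Real.exp (-b * x ^ 2))
      - (2 * b) * (x ^ (n + 2) * Real.exp (-b * x ^ 2)))
    (fun x => by
      have h1 := (hasDerivAt_pow (n + 1) x).mul
        (((hasDerivAt_pow 2 x).const_mul (-b)).exp)
      refine h1.congr_deriv ?_
      push_cast
      try simp only [Nat.add_sub_cancel]
      ring)
    (((gint b hb n).const_mul _).sub ((gint b hb (n + 2)).const_mul _))
    (gint b hb (n + 1))
  rw [integral_sub ((gint b hb n).const_mul _) ((gint b hb (n + 2)).const_mul _),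
    integral_const_mul, integral_const_mul] at h
  rw [div_mul_eq_mul_div, eq_div_iff (by positivity)]
  linarith

lemma gone (b : ℝ) (hb : 0 < b) :
    ∫ x : ℝ, x ^ 1 * Real.exp (-b * x ^ 2) = 0 := by
  have h := integral_eq_zero_of_hasDerivAt_of_integrable
    (f := fun x : ℝ => Real.exp (-b * x ^ 2))
    (f' := fun x : ℝ => (-2 * b) * (x ^ 1 * Real.exp (-b * x ^ 2)))
    (fun x => by
      have h1 := (((hasDerivAt_pow 2 x).const_mul (-b)).exp)
      refine h1.congr_deriv ?_
      push_cast
      try simp only [Nat.add_sub_cancel]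
      ring)
    ((gint b hb 1).const_mul _)
    (by simpa using gint b hb 0)
  rw [integral_const_mul] at h
  have : -2 * b ≠ 0 := by nlinarith
  simpa [this, hb.ne'] using h

lemma gmain (b d c : ℝ) (hb : 0 < b) (hd : 0 < d) :
    ∫ p : ℝ × ℝ, p.1 ^ 2 * p.2 ^ 4 * Real.exp (-b * (p.1 - c * p.2) ^ 2 + -d * p.2 ^ 2)
      = √(π / b) * √(π / d) * (3 / (8 * b * d ^ 2) + c ^ 2 * 15 / (8 * d ^ 3)) := by
  let f : ℝ × ℝ → ℝ := fun p => p.1 ^ 2 * p.2 ^ 4 *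
    Real.exp (-b * (p.1 - c * p.2) ^ 2 + -d * p.2 ^ 2)
  have hmp1 : MeasurePreserving (fun p : ℝ × ℝ => (p.1, p.2 + c * p.1))
      (volume.prod volume) (volume.prod volume) :=
    (MeasurePreserving.id volume).skew_product (g := fun x y => y + c * x) (by fun_prop)
      (Filter.Eventually.of_forall fun x => map_add_right_eq_self volume (c * x))
  have e1 : ∫ p : ℝ × ℝ, f p = ∫ p : ℝ × ℝ, f p.swap :=
    (integral_prod_swap (μ := (volume : Measure ℝ)) (ν := (volume : Measure ℝ)) f).symm
  have hemb : MeasurableEmbedding (fun p : ℝ × ℝ => (p.1, p.2 + c * p.1)) := by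
    refine Continuous.measurableEmbedding (by fun_prop) ?_
    rintro ⟨x, y⟩ ⟨x', y'⟩ h
    simp only [Prod.mk.injEq] at h
    obtain ⟨rfl, h⟩ := h
    simpa using h
  have e2 : ∫ p : ℝ × ℝ, f (p.2 + c * p.1, p.1) = ∫ p : ℝ × ℝ, f p.swap :=
    hmp1.integral_comp hemb (fun p => f p.swap)
  change ∫ p, f p = _
  rw [e1, ← e2]
  let G : ℕ → ℝ → ℝ → ℝ := fun n b x => x ^ n * Real.exp (-b * x ^ 2)
  have e3 : ∀ p : ℝ × ℝ, f (p.2 + c * p.1, p.1) =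
      (G 4 d p.1 * G 2 b p.2 + (2 * c) * (G 5 d p.1 * G 1 b p.2))
       + c ^ 2 * (G 6 d p.1 * G 0 b p.2) := by
    intro p
    simp only [f, G, Real.exp_add, add_sub_cancel_right]
    ring
  have hi : ∀ m n, Integrable (fun p : ℝ × ℝ => G m d p.1 * G n b p.2) := fun m n =>
    (gint d hd m).mul_prod (gint b hb n)
  have hp : ∀ m n, ∫ p : ℝ × ℝ, G m d p.1 * G n b p.2 = (∫ x, G m d x) * ∫ x, G n b x :=
    fun m n => integral_prod_mul (μ := (volume : Measure ℝ)) (ν := (volume : Measure ℝ)) _ _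
  have hz : ∀ b, ∫ x, G 0 b x = √(π / b) := fun b => by
    simp only [G, pow_zero, one_mul]; exact integral_gaussian b
  have h1 : ∫ x, G 1 b x = 0 := gone b hb
  have hr : ∀ b, 0 < b → ∀ n : ℕ, ∫ x, G (n + 2) b x = (n + 1) / (2 * b) * ∫ x, G n b x := grec
  simp_rw [e3]
  rw [integral_add (f := fun p : ℝ × ℝ => G 4 d p.1 * G 2 b p.2 + 2 * c * (G 5 d p.1 * G 1 b p.2))
      (((hi 4 2).add ((hi 5 1).const_mul _))) ((hi 6 0).const_mul _),
    integral_add (hi 4 2) ((hi 5 1).const_mul _), integral_const_mul, integral_const_mul,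
    hp, hp, hp, h1, hr d hd 4, hr d hd 2, hr d hd 0, hr b hb 0, hz, hz]
  push_cast
  field_simp
  ring

/-- For a centered bivariate Gaussian `(X₁, X₂)` with common variance `γ²` and
correlation `ρ`, with `V = γ²(1−ρ²)(2−ρ²)/((2−ρ²)²−ρ²)` and `𝓥 = γ²(1−ρ²)/(2−ρ²)`:
`E[X₁² X₂⁴ exp(−(X₁²+X₂²)/(2γ²))] = (3/γ)(2−ρ²)^{−1/2} V^{5/2}(𝓥 + 5ρ²V/(2−ρ²)²)`. -/
theorem stmt13 (γ ρ : ℝ) (hγ : 0 < γ) (hρ : -1 < ρ ∧ ρ < 1)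
    (V 𝓥 : ℝ)
    (hV : V = γ ^ 2 * (1 - ρ ^ 2) * (2 - ρ ^ 2) / ((2 - ρ ^ 2) ^ 2 - ρ ^ 2))
    (h𝓥 : 𝓥 = γ ^ 2 * (1 - ρ ^ 2) / (2 - ρ ^ 2)) :
    ∫ p : ℝ × ℝ, p.1 ^ 2 * p.2 ^ 4 * Real.exp (-(p.1 ^ 2 + p.2 ^ 2) / (2 * γ ^ 2))
        * bivGaussDens γ ρ p.1 p.2
      = (3 / γ) * (2 - ρ ^ 2) ^ (-(1 : ℝ) / 2) * V ^ ((5 : ℝ) / 2)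
          * (𝓥 + 5 * ρ ^ 2 * V / (2 - ρ ^ 2) ^ 2) := by
  have hq : 0 < 1 - ρ ^ 2 := by nlinarith [hρ.1, hρ.2]
  have ha : 0 < 2 - ρ ^ 2 := by linarith
  have hD : 0 < (2 - ρ ^ 2) ^ 2 - ρ ^ 2 := by nlinarith
  have hVp : 0 < V := by rw [hV]; positivity
  have hvp : 0 < 𝓥 := by rw [h𝓥]; positivity
  have key : ∀ p : ℝ × ℝ, p.1 ^ 2 * p.2 ^ 4 * Real.exp (-(p.1 ^ 2 + p.2 ^ 2) / (2 * γ ^ 2))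
        * bivGaussDens γ ρ p.1 p.2 = (2 * Real.pi * γ ^ 2 * Real.sqrt (1 - ρ ^ 2))⁻¹ *
        (p.1 ^ 2 * p.2 ^ 4 * Real.exp (-(1 / (2 * 𝓥)) * (p.1 - ρ / (2 - ρ ^ 2) * p.2) ^ 2
          + -(1 / (2 * V)) * p.2 ^ 2)) := by
    intro p
    have he : -(1 / (2 * 𝓥)) * (p.1 - ρ / (2 - ρ ^ 2) * p.2) ^ 2
          + -(1 / (2 * V)) * p.2 ^ 2 = -(p.1 ^ 2 + p.2 ^ 2) / (2 * γ ^ 2) +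
          -(p.1 ^ 2 - 2 * ρ * p.1 * p.2 + p.2 ^ 2) / (2 * γ ^ 2 * (1 - ρ ^ 2)) := by
      rw [hV, h𝓥]
      have := hq.ne'
      have := ha.ne'
      have := hD.ne'
      field_simp
      ring
    rw [he, Real.exp_add, bivGaussDens]
    ring
  simp_rw [key]
  rw [integral_const_mul, gmain _ _ _ (by positivity) (by positivity)]
  have s1 : √(π / (1 / (2 * 𝓥))) = √(2 * π) * (γ * √(1 - ρ ^ 2) / √(2 - ρ ^ 2)) := by
    rw [show π / (1 / (2 * 𝓥)) = (2 * π) * (γ ^ 2 * (1 - ρ ^ 2) / (2 - ρ ^ 2)) by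
      rw [← h𝓥]; field_simp, Real.sqrt_mul (x := 2 * π) (by positivity), Real.sqrt_div (by positivity),
      Real.sqrt_mul (sq_nonneg γ), Real.sqrt_sq hγ.le]
  have s2 : √(π / (1 / (2 * V))) = √(2 * π) * √V := by
    rw [show π / (1 / (2 * V)) = (2 * π) * V by field_simp, Real.sqrt_mul (x := 2 * π) (by positivity)]
  have s3 : V ^ ((5 : ℝ) / 2) = V ^ 2 * √V := by
    rw [show (5 : ℝ) / 2 = (2 : ℕ) + 1 / 2 by norm_num, Real.rpow_add hVp, Real.rpow_natCast,
      Real.sqrt_eq_rpow]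
  have s4 : (2 - ρ ^ 2) ^ (-(1 : ℝ) / 2) = (√(2 - ρ ^ 2))⁻¹ := by
    rw [neg_div, Real.rpow_neg ha.le, Real.sqrt_eq_rpow]
  have s5 : √(2 * π) * √(2 * π) = 2 * π := Real.mul_self_sqrt (by positivity)
  rw [s1, s2, s3, s4]
  have hs : 0 < √(1 - ρ ^ 2) := Real.sqrt_pos.2 hq
  have ht : 0 < √(2 - ρ ^ 2) := Real.sqrt_pos.2 ha
  have := ha.ne'
  rw [show √(2 * π) * (γ * √(1 - ρ ^ 2) / √(2 - ρ ^ 2)) * (√(2 * π) * √V) =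
    (√(2 * π) * √(2 * π)) * (γ * √(1 - ρ ^ 2) / √(2 - ρ ^ 2)) * √V by ring, s5]
  generalize √(1 - ρ ^ 2) = A at *
  generalize √(2 - ρ ^ 2) = B at *
  generalize 2 - ρ ^ 2 = a at *
  field_simp
  ring
end

section
/- Let X be a standard Gaussian random variable. Then for every t ∈ ℝ, E[exp(i t log(X²))] = 2^{it} Γ(1/2 + it) / √π, where Γ denotes the complex Gamma function. -/
open MeasureTheory Real Complex

/-- The standard Gaussian density. -/
noncomputable def stdGaussDens (x : ℝ) : ℝ :=
  (Real.sqrt (2 * Real.pi))⁻¹ * Real.exp (-x ^ 2 / 2)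

lemma aux_pt (t : ℝ) (x : ℝ) (hx : 0 < x) :
    (2 * x ^ ((2:ℝ) - 1)) • ((((x ^ (2:ℝ) : ℝ) : ℂ)) ^ ((1 / 2 + Complex.I * t : ℂ) - 1)
      * Complex.exp (-((1/2 : ℂ) * ((x ^ (2:ℝ) : ℝ) : ℂ))))
    = 2 * (Complex.exp ((t : ℂ) * Real.log (x ^ 2) * Complex.I)
        * (Real.exp (-x ^ 2 / 2) : ℂ)) := by
  have h1 : x ^ ((2:ℝ) - 1) = x := by norm_num
  have h2 : x ^ (2:ℝ) = x ^ 2 := by norm_num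
  have hx2 : ((x ^ 2 : ℝ) : ℂ) ≠ 0 := by exact_mod_cast (by positivity : x ^ 2 ≠ 0)
  have h3 : (x : ℂ) = Complex.exp ((1/2 : ℂ) * Real.log (x ^ 2)) := by
    rw [Real.log_pow]
    conv_lhs => rw [← Real.exp_log hx]
    push_cast
    congr 1
    ring
  rw [h1, h2, Complex.cpow_def_of_ne_zero hx2, ← Complex.ofReal_log (by positivity),
    Complex.real_smul, Complex.ofReal_mul]
  have h4 : Complex.exp (Real.log (x ^ 2) * ((1 / 2 + Complex.I * t : ℂ) - 1)) * x =
      Complex.exp ((t : ℂ) * Real.log (x ^ 2) * Complex.I) := by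
    conv_lhs => rw [h3]
    rw [← Complex.exp_add]
    congr 1
    ring
  rw [← h4]
  have h5 : ((Real.exp (-x ^ 2 / 2) : ℝ) : ℂ) = Complex.exp (-((1/2 : ℂ) * ((x ^ 2 : ℝ) : ℂ))) := by
    push_cast
    congr 1
    ring
  rw [h5]
  push_cast
  ring

lemma aux_int (t : ℝ) : Integrable (fun x : ℝ =>
    Complex.exp ((t : ℂ) * Real.log (x ^ 2) * Complex.I) * (Real.exp (-x ^ 2 / 2) : ℂ)) := by
  have h : Integrable (fun x : ℝ => Real.exp (-x ^ 2 / 2)) := by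
    have := integrable_exp_neg_mul_sq (b := 1/2) (by norm_num)
    refine this.congr (ae_of_all _ fun x => ?_)
    simp only
    congr 1
    ring
  refine Integrable.bdd_mul (c := 1) h.ofReal ?_ ?_
  · exact Measurable.aestronglyMeasurable (by fun_prop)
  · refine ae_of_all _ fun x => ?_
    rw [← Complex.ofReal_mul, Complex.norm_exp_ofReal_mul_I]

/-- For `X ∼ N(0,1)`, `E[exp(i t log X²)] = 2^{it} Γ(1/2 + it)/√π`. -/
theorem stmt15 (t : ℝ) :
    ∫ x : ℝ, Complex.exp ((t : ℂ) * Real.log (x ^ 2) * Complex.I) * (stdGaussDens x : ℂ)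
      = (2 : ℂ) ^ (Complex.I * t) * Complex.Gamma (1 / 2 + Complex.I * t)
          / (Real.sqrt Real.pi : ℂ) := by
  set F : ℝ → ℂ := fun x => Complex.exp ((t : ℂ) * Real.log (x ^ 2) * Complex.I)
    * (Real.exp (-x ^ 2 / 2) : ℂ) with hF
  have e1 : ∀ x : ℝ, Complex.exp ((t : ℂ) * Real.log (x ^ 2) * Complex.I) * (stdGaussDens x : ℂ)
      = ((Real.sqrt (2 * Real.pi) : ℝ) : ℂ)⁻¹ * F x := by
    intro x
    simp only [hF, stdGaussDens]
    push_cast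
    ring
  simp_rw [e1]
  rw [integral_const_mul]
  have e2 : ∫ x, F x = 2 * ∫ x in Set.Ioi (0:ℝ), F x := by
    rw [← intervalIntegral.integral_Iic_add_Ioi (b := (0:ℝ)) (aux_int t).integrableOn
      (aux_int t).integrableOn]
    have : ∫ x in Set.Iic (0:ℝ), F x = ∫ x in Set.Ioi (0:ℝ), F x := by
      have h := integral_comp_neg_Iic (0:ℝ) F
      rw [neg_zero] at h
      rw [← h]
      simp [hF]
    rw [this]
    ring
  have e3 := Complex.integral_cpow_mul_exp_neg_mul_Ioi (a := 1 / 2 + Complex.I * t) (r := 1/2)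
    (by simp) (by norm_num)
  have hh : (((1 / 2 : ℝ)) : ℂ) = 1 / 2 := by norm_num
  rw [hh] at e3
  rw [← integral_comp_rpow_Ioi_of_pos (p := 2) (by norm_num),
    setIntegral_congr_fun measurableSet_Ioi (fun x hx => aux_pt t x hx),
    integral_const_mul] at e3
  rw [e2, e3]
  have hs : ((Real.sqrt 2 : ℝ) : ℂ) = (2:ℂ) ^ (1/2 : ℂ) := by
    rw [Real.sqrt_eq_rpow, Complex.ofReal_cpow (by norm_num)]
    norm_num
  have h2 : ((Real.sqrt 2 : ℝ) : ℂ) ≠ 0 := by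
    exact_mod_cast (by positivity : Real.sqrt 2 ≠ 0)
  have hp : ((Real.sqrt Real.pi : ℝ) : ℂ) ≠ 0 := by
    exact_mod_cast (by positivity : Real.sqrt Real.pi ≠ 0)
  rw [one_div_one_div, Complex.cpow_add _ _ two_ne_zero, ← hs, Real.sqrt_mul (by norm_num),
    Complex.ofReal_mul]
  field_simp
end
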